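/- arXiv:2605.11160 — 4 statements merged into one kernel-verified Lean document; each statement's English description precedes it below -/
import Mathlib

section
/- Let n : ℝ² → ℝ² be Fréchet differentiable at a point x ∈ ℝ², and suppose ‖n(y)‖ = 1 for all y in some neighborhood of x. Then for every direction u ∈ ℝ², the composition G ∘ n is Fréchet differentiable at x and ‖(fderiv (G ∘ n) x)(u)‖²_{ℝ⁴} = (4Q_c² + M_c²)·‖(fderiv n x)(u)‖²_{ℝ²}. -/
/-- The map `G : ℝ² → ℝ⁴`, `G(n) = (Q_c(2n₁² − 1), 2Q_c n₁n₂, M_c n₁, M_c n₂)`. -/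
noncomputable def mapG (Qc Mc : ℝ) (n : EuclideanSpace ℝ (Fin 2)) :
    EuclideanSpace ℝ (Fin 4) :=
  WithLp.toLp 2 (![Qc * (2 * n 0 ^ 2 - 1), 2 * Qc * n 0 * n 1, Mc * n 0, Mc * n 1] : Fin 4 → ℝ)

/-- if `n : ℝ² → ℝ²` is Fréchet differentiable at `x` and `‖n(y)‖ = 1` for all
`y` in a neighborhood of `x`, then `G ∘ n` is Fréchet differentiable at `x` and for every
direction `u ∈ ℝ²`, `‖(fderiv (G ∘ n) x)(u)‖² = (4Q_c² + M_c²)·‖(fderiv n x)(u)‖²`. -/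
theorem stmt_2 (Qc Mc : ℝ) (hQc : 0 < Qc) (hMc : 0 < Mc)
    (n : EuclideanSpace ℝ (Fin 2) → EuclideanSpace ℝ (Fin 2))
    (x : EuclideanSpace ℝ (Fin 2))
    (hdiff : DifferentiableAt ℝ n x)
    (hnorm : ∀ᶠ y in nhds x, ‖n y‖ = 1) :
    DifferentiableAt ℝ (mapG Qc Mc ∘ n) x ∧
      ∀ u : EuclideanSpace ℝ (Fin 2),
        ‖fderiv ℝ (mapG Qc Mc ∘ n) x u‖ ^ 2
          = (4 * Qc ^ 2 + Mc ^ 2) * ‖fderiv ℝ n x u‖ ^ 2 := by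
  have hn0 : ∀ i, HasFDerivAt (fun y => n y i)
      ((EuclideanSpace.proj i : EuclideanSpace ℝ (Fin 2) →L[ℝ] ℝ).comp (fderiv ℝ n x)) x := by
    intro i
    exact (EuclideanSpace.proj i : EuclideanSpace ℝ (Fin 2) →L[ℝ] ℝ).hasFDerivAt.comp x
      hdiff.hasFDerivAt
  have hd : DifferentiableAt ℝ (mapG Qc Mc ∘ n) x := by
    rw [differentiableAt_euclidean]
    have h0 := (hn0 0).differentiableAt
    have h1 := (hn0 1).differentiableAt
    intro i
    fin_cases i <;> simp [mapG] <;> fun_prop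
  refine ⟨hd, fun u => ?_⟩
  have key : ∀ i, HasFDerivAt (fun y => mapG Qc Mc (n y) i)
      ((EuclideanSpace.proj i : EuclideanSpace ℝ (Fin 4) →L[ℝ] ℝ).comp
        (fderiv ℝ (mapG Qc Mc ∘ n) x)) x := by
    intro i
    exact (EuclideanSpace.proj i : EuclideanSpace ℝ (Fin 4) →L[ℝ] ℝ).hasFDerivAt.comp x
      hd.hasFDerivAt
  have e0 := congrArg (fun L => L u) ((key 0).unique
    (((((hn0 0).mul (hn0 0)).const_mul 2).sub_const 1).const_mul Qc |>.congr_of_eventuallyEq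
      (Filter.Eventually.of_forall fun y => by simp [mapG]; left; ring)))
  have e1 := congrArg (fun L => L u) ((key 1).unique
    (((hn0 0).mul (hn0 1)).const_mul (2 * Qc) |>.congr_of_eventuallyEq
      (Filter.Eventually.of_forall fun y => by simp [mapG]; ring)))
  have e2 := congrArg (fun L => L u) ((key 2).unique
    ((hn0 0).const_mul Mc |>.congr_of_eventuallyEq
      (Filter.Eventually.of_forall fun y => by simp [mapG])))
  have e3 := congrArg (fun L => L u) ((key 3).unique
    ((hn0 1).const_mul Mc |>.congr_of_eventuallyEq
      (Filter.Eventually.of_forall fun y => by simp [mapG])))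
  have hsq : ∀ᶠ y in nhds x, n y 0 * n y 0 + n y 1 * n y 1 = 1 := by
    filter_upwards [hnorm] with y hy
    have h := EuclideanSpace.real_norm_sq_eq (n y)
    rw [hy, Fin.sum_univ_two] at h
    linarith
  have h1 := hsq.self_of_nhds
  have e4 := congrArg (fun L => L u) ((((hn0 0).mul (hn0 0)).add ((hn0 1).mul (hn0 1))).unique
    ((hasFDerivAt_const (1 : ℝ) x).congr_of_eventuallyEq hsq))
  simp at e0 e1 e2 e3 e4
  rw [EuclideanSpace.real_norm_sq_eq, EuclideanSpace.real_norm_sq_eq, Fin.sum_univ_four,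
    Fin.sum_univ_two, e0, e1, e2, e3]
  generalize (fderiv ℝ n x u) 0 = p at *
  generalize (fderiv ℝ n x u) 1 = q at *
  generalize n x 0 = a at *
  generalize n x 1 = b at *
  have h2 : a * p + b * q = 0 := by linarith
  linear_combination 4 * Qc ^ 2 * (3 * a * p - b * q) * h2 + 4 * Qc ^ 2 * (p ^ 2 + q ^ 2) * h1
end

section
/- Let n ∈ ℝ² with ‖n‖ = 1, let t := (−n₂, n₁) be the rotation of n by π/2, let ν := R(n), and let τ := (−ν₂, ν₁) be the rotation of ν by π/2. Then for every r ∈ ℝ with −1 < r < 1, the vectors n + r·t and ν + φ(r)·τ are nonzero (indeed ‖n + r·t‖ ≥ 1 and ‖ν + φ(r)·τ‖ ≥ 1), and R(P_S(n + r·t)) = P_S(ν + φ(r)·τ). -/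
/-- The map `R : ℝ² → ℝ²`, `R(n) = (2n₁² − 1, 2n₁n₂) = (2 n⊗n − I)e₁`. -/
noncomputable def mapR (n : EuclideanSpace ℝ (Fin 2)) : EuclideanSpace ℝ (Fin 2) :=
  WithLp.toLp 2 (![2 * n 0 ^ 2 - 1, 2 * n 0 * n 1] : Fin 2 → ℝ)

/-- Radial projection `P_S(x) := ‖x‖⁻¹ • x` onto the unit circle. -/
noncomputable def projS (x : EuclideanSpace ℝ (Fin 2)) : EuclideanSpace ℝ (Fin 2) :=
  ‖x‖⁻¹ • x

/-- for `n` on the unit circle with `t` its rotation by `π/2`, `ν := R(n)` and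
`τ` the rotation of `ν` by `π/2`, and for every `r ∈ (−1,1)` with `φ(r) := 2r/(1 − r²)`, the
vectors `n + r·t` and `ν + φ(r)·τ` are nonzero (indeed of norm `≥ 1`), and
`R(P_S(n + r·t)) = P_S(ν + φ(r)·τ)`. -/
theorem stmt_13 (n : EuclideanSpace ℝ (Fin 2)) (hn : ‖n‖ = 1)
    (t : EuclideanSpace ℝ (Fin 2)) (ht : t = (![-(n 1), n 0] : Fin 2 → ℝ))
    (ν : EuclideanSpace ℝ (Fin 2)) (hν : ν = mapR n)
    (τ : EuclideanSpace ℝ (Fin 2)) (hτ : τ = (![-(ν 1), ν 0] : Fin 2 → ℝ))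
    (r : ℝ) (hr₁ : -1 < r) (hr₂ : r < 1) :
    n + r • t ≠ 0 ∧ 1 ≤ ‖n + r • t‖ ∧
    ν + (2 * r / (1 - r ^ 2)) • τ ≠ 0 ∧ 1 ≤ ‖ν + (2 * r / (1 - r ^ 2)) • τ‖ ∧
    mapR (projS (n + r • t)) = projS (ν + (2 * r / (1 - r ^ 2)) • τ) := by
  have t0 : t 0 = -(n 1) := by simpa using congrFun ht 0
  have t1 : t 1 = n 0 := by simpa using congrFun ht 1
  have v0 : ν 0 = 2 * n 0 ^ 2 - 1 := by rw [hν]; simp [mapR]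
  have v1 : ν 1 = 2 * n 0 * n 1 := by rw [hν]; simp [mapR]
  have u0 : τ 0 = -(2 * n 0 * n 1) := by rw [← v1]; simpa using congrFun hτ 0
  have u1 : τ 1 = 2 * n 0 ^ 2 - 1 := by rw [← v0]; simpa using congrFun hτ 1
  have hab : n 0 ^ 2 + n 1 ^ 2 = 1 := by
    have h := EuclideanSpace.real_norm_sq_eq n
    rw [hn, Fin.sum_univ_two] at h
    linarith
  have hs : 0 < 1 - r ^ 2 := by nlinarith
  have hp : 0 < 1 + r ^ 2 := by positivity
  have hb : n 1 ^ 2 = 1 - n 0 ^ 2 := by linarith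
  have N1 : ‖n + r • t‖ ^ 2 = 1 + r ^ 2 := by
    rw [EuclideanSpace.real_norm_sq_eq, Fin.sum_univ_two]
    simp only [PiLp.add_apply, PiLp.smul_apply, smul_eq_mul, t0, t1]
    linear_combination (1 + r ^ 2) * hab
  have N2 : ‖ν + (2 * r / (1 - r ^ 2)) • τ‖ = (1 + r ^ 2) / (1 - r ^ 2) := by
    rw [← sq_eq_sq₀ (norm_nonneg _) (by positivity), EuclideanSpace.real_norm_sq_eq,
      Fin.sum_univ_two]
    simp only [PiLp.add_apply, PiLp.smul_apply, smul_eq_mul, v0, v1, u0, u1]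
    have hq : ((1 + r ^ 2) / (1 - r ^ 2)) ^ 2 = 1 + (2 * r / (1 - r ^ 2)) ^ 2 := by
      field_simp
      ring
    rw [hq]
    generalize 2 * r / (1 - r ^ 2) = f
    linear_combination (1 + f ^ 2) * 4 * n 0 ^ 2 * hab
  have L1 : 1 ≤ ‖n + r • t‖ := by nlinarith [norm_nonneg (n + r • t), sq_nonneg r]
  have L2 : 1 ≤ ‖ν + (2 * r / (1 - r ^ 2)) • τ‖ := by
    rw [N2, le_div_iff₀ hs]; nlinarith [sq_nonneg r]
  refine ⟨norm_pos_iff.1 (by linarith), L1, norm_pos_iff.1 (by linarith), L2, ?_⟩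
  have I1 : (‖n + r • t‖⁻¹) ^ 2 = (1 + r ^ 2)⁻¹ := by rw [inv_pow, N1]
  unfold projS
  rw [N2]
  generalize ‖n + r • t‖⁻¹ = c at I1
  ext i
  fin_cases i
  · simp only [mapR, PiLp.add_apply, PiLp.smul_apply, smul_eq_mul, t0, t1, v0, u0, Fin.zero_eta,
      Fin.isValue, Matrix.cons_val_zero, mul_pow, I1]
    field_simp
    linear_combination (2 * r ^ 2) * hab
  · simp only [mapR, PiLp.add_apply, PiLp.smul_apply, smul_eq_mul, t0, t1, v1, u1, Fin.mk_one,
      Fin.isValue, Matrix.cons_val_one, Matrix.cons_val_zero]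
    have : 2 * (c * (n 0 + r * -n 1)) * (c * (n 1 + r * n 0))
        = c ^ 2 * (2 * (n 0 + r * -n 1) * (n 1 + r * n 0)) := by ring
    rw [this, I1]
    field_simp
    linear_combination (-r) * hab
end

section
/- Let V be a finite set and let k : V × V → ℝ satisfy k(a,b) = k(b,a) for all a, b ∈ V and k(a,b) ≤ 0 whenever a ≠ b. Let d ≥ 1 and let x : V → ℝ^d satisfy ‖x(a)‖ ≥ 1 for all a ∈ V. Then −(1/2) ∑_{a∈V} ∑_{b∈V} k(a,b) ‖P_S(x(a)) − P_S(x(b))‖² ≤ −(1/2) ∑_{a∈V} ∑_{b∈V} k(a,b) ‖x(a) − x(b)‖², where P_S(x) := ‖x‖⁻¹ • x. -/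
theorem proj_aux {E : Type*} [NormedAddCommGroup E] [InnerProductSpace ℝ E] (x y : E)
    (hx : 1 ≤ ‖x‖) (hy : 1 ≤ ‖y‖) :
    ‖‖x‖⁻¹ • x - ‖y‖⁻¹ • y‖ ^ 2 ≤ ‖x - y‖ ^ 2 := by
  have hx0 : ‖x‖ ≠ 0 := by linarith
  have hy0 : ‖y‖ ≠ 0 := by linarith
  have hu : ‖‖x‖⁻¹ • x‖ = 1 := by rw [norm_smul, norm_inv, norm_norm, inv_mul_cancel₀ hx0]
  have hv : ‖‖y‖⁻¹ • y‖ = 1 := by rw [norm_smul, norm_inv, norm_norm, inv_mul_cancel₀ hy0]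
  rw [norm_sub_sq_real, norm_sub_sq_real, hu, hv, real_inner_smul_left, real_inner_smul_right]
  have hc := real_inner_le_norm x y
  obtain ⟨c, hc'⟩ : ∃ c, c = ‖x‖⁻¹ * (‖y‖⁻¹ * inner ℝ x y) := ⟨_, rfl⟩
  have h1 : inner ℝ x y = ‖x‖ * ‖y‖ * c := by rw [hc']; field_simp
  have hpos : 1 ≤ ‖x‖ * ‖y‖ := by nlinarith
  have hc1 : c ≤ 1 := by
    rw [h1] at hc
    by_contra h
    push Not at h
    nlinarith
  rw [← hc', h1]
  nlinarith [sq_nonneg (‖x‖ - ‖y‖), mul_nonneg (sub_nonneg.2 hpos) (sub_nonneg.2 hc1)]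

/-- for a finite set `V`, a symmetric kernel `k` with nonpositive off-diagonal
entries, `d ≥ 1` and `x : V → ℝ^d` with `‖x(a)‖ ≥ 1` for all `a`, one has
`−(1/2) ∑ₐ∑_b k(a,b) ‖P_S(x(a)) − P_S(x(b))‖² ≤ −(1/2) ∑ₐ∑_b k(a,b) ‖x(a) − x(b)‖²`,
where `P_S(x) := ‖x‖⁻¹ • x`. -/
theorem stmt_14 {V : Type*} [Fintype V] (k : V → V → ℝ)
    (hsym : ∀ a b, k a b = k b a)
    (hoff : ∀ a b, a ≠ b → k a b ≤ 0)
    (d : ℕ) (hd : 1 ≤ d) (x : V → EuclideanSpace ℝ (Fin d))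
    (hx : ∀ a, 1 ≤ ‖x a‖) :
    -(1 / 2) * ∑ a, ∑ b, k a b * ‖‖x a‖⁻¹ • x a - ‖x b‖⁻¹ • x b‖ ^ 2
      ≤ -(1 / 2) * ∑ a, ∑ b, k a b * ‖x a - x b‖ ^ 2 := by
  have h : ∑ a, ∑ b, k a b * ‖x a - x b‖ ^ 2
      ≤ ∑ a, ∑ b, k a b * ‖‖x a‖⁻¹ • x a - ‖x b‖⁻¹ • x b‖ ^ 2 := by
    refine Finset.sum_le_sum fun a _ => Finset.sum_le_sum fun b _ => ?_
    by_cases hab : a = b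
    · subst hab
      simp
    · exact mul_le_mul_of_nonpos_left (proj_aux _ _ (hx a) (hx b)) (hoff a b hab)
  linarith
end

section
/- Let V be a finite set and let k : V × V → ℝ satisfy k(a,b) = k(b,a) for all a, b ∈ V, ∑_{b∈V} k(a,b) = 0 for all a ∈ V, and k(a,b) ≤ 0 whenever a ≠ b. Let n : V → ℝ² satisfy ‖n(a)‖ = 1 for all a ∈ V; set t(a) := (−n(a)₂, n(a)₁), ν(a) := R(n(a)), and τ(a) := (−ν(a)₂, ν(a)₁). Let γ ∈ (0,1) and define, for r : V → ℝ with |r(a)| ≤ γ for all a, F(r) := −(1/2) ∑_{a∈V} ∑_{b∈V} k(a,b) { Q_c² ‖(ν(a) + φ(r(a))·τ(a)) − (ν(b) + φ(r(b))·τ(b))‖² + M_c² ‖(n(a) + r(a)·t(a)) − (n(b) + r(b)·t(b))‖² }. Suppose r* : V → ℝ satisfies |r*(a)| ≤ γ for all a ∈ V and F(r*) ≤ F(0) (where 0 denotes the zero map). Define the updated vectors n⁺(a) := P_S(n(a) + r*(a)·t(a)) and ν⁺(a) := R(n⁺(a)). Then −(1/2) ∑_{a∈V} ∑_{b∈V}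 k(a,b) { Q_c² ‖ν⁺(a) − ν⁺(b)‖² + M_c² ‖n⁺(a) − n⁺(b)‖² } ≤ −(1/2) ∑_{a∈V} ∑_{b∈V} k(a,b) { Q_c² ‖ν(a) − ν(b)‖² + M_c² ‖n(a) − n(b)‖² }; in particular the discrete harmonic energy does not increase under the update. -/
theorem aux_contract {E : Type*} [NormedAddCommGroup E] [InnerProductSpace ℝ E]
    (u v : E) (hu : ‖u‖ = 1) (hv : ‖v‖ = 1) (s t : ℝ) (hs : 1 ≤ s) (ht : 1 ≤ t) :
    ‖u - v‖ ^ 2 ≤ ‖s • u - t • v‖ ^ 2 := by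
  have hc : inner ℝ u v ≤ (1 : ℝ) := by
    have := real_inner_le_norm u v
    rwa [hu, hv, one_mul] at this
  rw [norm_sub_sq_real, norm_sub_sq_real, norm_smul, norm_smul, hu, hv, real_inner_smul_left,
    real_inner_smul_right, mul_one, mul_one, Real.norm_eq_abs, Real.norm_eq_abs, sq_abs, sq_abs]
  have h1 : 1 ≤ s * t := by nlinarith
  nlinarith [sq_nonneg (s - t), mul_nonneg (sub_nonneg.2 h1) (sub_nonneg.2 hc)]

theorem aux_norm_sq (x : EuclideanSpace ℝ (Fin 2)) : ‖x‖ ^ 2 = x 0 ^ 2 + x 1 ^ 2 := by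
  rw [EuclideanSpace.real_norm_sq_eq, Fin.sum_univ_two]

theorem aux_point (n t ν τ m μ : EuclideanSpace ℝ (Fin 2)) (r : ℝ) (hr : |r| < 1)
    (hn : ‖n‖ = 1) (ht : t = (![-(n 1), n 0] : Fin 2 → ℝ)) (hν : ν = mapR n)
    (hτ : τ = (![-(ν 1), ν 0] : Fin 2 → ℝ))
    (hm : m = ‖n + r • t‖⁻¹ • (n + r • t)) (hμ : μ = mapR m) :
    ‖m‖ = 1 ∧ ‖μ‖ = 1 ∧ (∃ s : ℝ, 1 ≤ s ∧ n + r • t = s • m) ∧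
      ∃ s : ℝ, 1 ≤ s ∧ ν + (2 * r / (1 - r ^ 2)) • τ = s • μ := by
  have hn2 : n 0 ^ 2 + n 1 ^ 2 = 1 := by rw [← aux_norm_sq, hn]; norm_num
  have ht0 : t 0 = - n 1 := by simp [ht]
  have ht1 : t 1 = n 0 := by simp [ht]
  have hτ0 : τ 0 = - ν 1 := by simp [hτ]
  have hτ1 : τ 1 = ν 0 := by simp [hτ]
  have hν0 : ν 0 = 2 * n 0 ^ 2 - 1 := by simp [hν, mapR]
  have hν1 : ν 1 = 2 * n 0 * n 1 := by simp [hν, mapR]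
  have hμ0 : μ 0 = 2 * m 0 ^ 2 - 1 := by simp [hμ, mapR]
  have hμ1 : μ 1 = 2 * m 0 * m 1 := by simp [hμ, mapR]
  set s := ‖n + r • t‖ with hs
  have hs2 : s ^ 2 = 1 + r ^ 2 := by
    rw [hs, aux_norm_sq]
    simp only [PiLp.add_apply, PiLp.smul_apply, smul_eq_mul, ht0, ht1]
    linear_combination (1 + r ^ 2) * hn2
  have hs0 : 0 ≤ s := norm_nonneg _
  have hs1 : 1 ≤ s := by nlinarith [sq_nonneg r]
  have hsne : s ≠ 0 := by linarith
  have hsm : n + r • t = s • m := by rw [hm, smul_inv_smul₀ hsne]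
  have hmn : ‖m‖ = 1 := by
    rw [hm, norm_smul, norm_inv, Real.norm_eq_abs, abs_of_nonneg hs0, ← hs]
    exact inv_mul_cancel₀ hsne
  have hm2 : m 0 ^ 2 + m 1 ^ 2 = 1 := by rw [← aux_norm_sq, hmn]; norm_num
  have hμn : ‖μ‖ = 1 := by
    have : ‖μ‖ ^ 2 = 1 := by
      rw [aux_norm_sq, hμ0, hμ1]
      linear_combination (4 * m 0 ^ 2) * hm2
    nlinarith [norm_nonneg μ]
  have e0 : n 0 - r * n 1 = s * m 0 := by
    have := congrArg (fun x : EuclideanSpace ℝ (Fin 2) => x 0) hsm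
    simp only [PiLp.add_apply, PiLp.smul_apply, smul_eq_mul, ht0] at this
    linarith
  have e1 : n 1 + r * n 0 = s * m 1 := by
    have := congrArg (fun x : EuclideanSpace ℝ (Fin 2) => x 1) hsm
    simpa only [PiLp.add_apply, PiLp.smul_apply, smul_eq_mul, ht1] using this
  have hr2 : 0 < 1 - r ^ 2 := by
    have := (sq_lt_one_iff_abs_lt_one r).2 hr
    linarith
  have hrne : 1 - r ^ 2 ≠ 0 := hr2.ne'
  have E0 : (n 0 - r * n 1) ^ 2 = (1 + r ^ 2) * m 0 ^ 2 := by rw [e0, mul_pow, hs2]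
  have E1 : (n 0 - r * n 1) * (n 1 + r * n 0) = (1 + r ^ 2) * (m 0 * m 1) := by
    rw [e0, e1, ← hs2]; ring
  refine ⟨hmn, hμn, ⟨s, hs1, hsm⟩, (1 + r ^ 2) / (1 - r ^ 2), ?_, ?_⟩
  · rw [le_div_iff₀ hr2]; nlinarith [sq_nonneg r]
  · ext i
    fin_cases i
    · simp only [Fin.zero_eta, PiLp.add_apply, PiLp.smul_apply, smul_eq_mul, hτ0, hν0, hν1, hμ0]
      field_simp
      linear_combination 2 * E0 - 2 * r ^ 2 * hn2
    · simp only [Fin.mk_one, PiLp.add_apply, PiLp.smul_apply, smul_eq_mul, hτ1, hν0, hν1, hμ1]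
      field_simp
      linear_combination E1 + r * hn2

/-- discrete energy decay. Let `k` be a symmetric kernel on the finite set `V`
with zero row sums and nonpositive off-diagonal entries, `n : V → ℝ²` unit vectors, `t(a)`
the rotation of `n(a)` by `π/2`, `ν(a) := R(n(a))`, `τ(a)` the rotation of `ν(a)` by `π/2`,
and `γ ∈ (0,1)`. Let `F` be the functional of the algorithm (with `φ(r) = 2r/(1−r²)`),
defined for `r : V → ℝ` with `|r(a)| ≤ γ`. If `r*` satisfies `|r*(a)| ≤ γ` and
`F(r*) ≤ F(0)`, then the updated vectors `n⁺(a) := P_S(n(a) + r*(a)·t(a))`,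
`ν⁺(a) := R(n⁺(a))` do not increase the discrete harmonic energy. -/
theorem stmt_15 (Qc Mc : ℝ) (hQc : 0 < Qc) (hMc : 0 < Mc)
    {V : Type*} [Fintype V] (k : V → V → ℝ)
    (hsym : ∀ a b, k a b = k b a)
    (hrow : ∀ a, ∑ b, k a b = 0)
    (hoff : ∀ a b, a ≠ b → k a b ≤ 0)
    (n : V → EuclideanSpace ℝ (Fin 2)) (hn : ∀ a, ‖n a‖ = 1)
    (t : V → EuclideanSpace ℝ (Fin 2)) (ht : ∀ a, t a = (![-(n a 1), n a 0] : Fin 2 → ℝ))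
    (ν : V → EuclideanSpace ℝ (Fin 2)) (hν : ∀ a, ν a = mapR (n a))
    (τ : V → EuclideanSpace ℝ (Fin 2)) (hτ : ∀ a, τ a = (![-(ν a 1), ν a 0] : Fin 2 → ℝ))
    (γ : ℝ) (hγ : γ ∈ Set.Ioo (0 : ℝ) 1)
    (F : (V → ℝ) → ℝ)
    (hF : ∀ r : V → ℝ, (∀ a, |r a| ≤ γ) →
      F r = -(1 / 2) * ∑ a, ∑ b, k a b *
        (Qc ^ 2 * ‖(ν a + (2 * r a / (1 - r a ^ 2)) • τ a)
            - (ν b + (2 * r b / (1 - r b ^ 2)) • τ b)‖ ^ 2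
          + Mc ^ 2 * ‖(n a + r a • t a) - (n b + r b • t b)‖ ^ 2))
    (rstar : V → ℝ) (hrstar : ∀ a, |rstar a| ≤ γ)
    (hmin : F rstar ≤ F (fun _ => 0))
    (nplus : V → EuclideanSpace ℝ (Fin 2))
    (hnplus : ∀ a, nplus a = ‖n a + rstar a • t a‖⁻¹ • (n a + rstar a • t a))
    (νplus : V → EuclideanSpace ℝ (Fin 2)) (hνplus : ∀ a, νplus a = mapR (nplus a)) :
    -(1 / 2) * ∑ a, ∑ b, k a b *
        (Qc ^ 2 * ‖νplus a - νplus b‖ ^ 2 + Mc ^ 2 * ‖nplus a - nplus b‖ ^ 2)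
      ≤ -(1 / 2) * ∑ a, ∑ b, k a b *
          (Qc ^ 2 * ‖ν a - ν b‖ ^ 2 + Mc ^ 2 * ‖n a - n b‖ ^ 2) := by
  have h0 := hF (fun _ => 0) (fun a => by simpa using hγ.1.le)
  rw [hF rstar hrstar, h0] at hmin
  simp only [mul_zero, zero_div, zero_smul, add_zero] at hmin
  refine le_trans ?_ hmin
  have key : ∀ a, _ := fun a => aux_point (n a) (t a) (ν a) (τ a) (nplus a) (νplus a) (rstar a)
    (lt_of_le_of_lt (hrstar a) hγ.2) (hn a) (ht a) (hν a) (hτ a) (hnplus a) (hνplus a)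
  apply mul_le_mul_of_nonpos_left _ (by norm_num)
  refine Finset.sum_le_sum fun a _ => Finset.sum_le_sum fun b _ => ?_
  by_cases hab : a = b
  · subst hab; simp
  · apply mul_le_mul_of_nonpos_left _ (hoff a b hab)
    obtain ⟨ha1, ha2, ⟨s, hs, hs'⟩, p, hp, hp'⟩ := key a
    obtain ⟨hb1, hb2, ⟨s2, hs2, hs2'⟩, q, hq, hq'⟩ := key b
    rw [hs', hs2', hp', hq']
    have A := aux_contract _ _ ha2 hb2 p q hp hq
    have B := aux_contract _ _ ha1 hb1 s s2 hs hs2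
    gcongr
end
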